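/- Let Σ̂ ∈ ℝ^{p×p} be symmetric positive semidefinite, let Σ ∈ ℝ^{p×p}, e ∈ ℝ^p, and let β* ∈ ℝ^p satisfy Σβ* = e. Then for every β̂ ∈ ℝ^p, (β̂ − β*)ᵀ(Σ̂β̂ − e) ≥ −‖Σ̂ − Σ‖_∞ · |β*|_1 · |β̂ − β*|_1. -/

import Mathlib

open Matrix
open scoped BigOperators

/-- The ℓ1 norm of a vector in ℝ^p. -/
noncomputable def vecL1 {p : ℕ} (a : Fin p → ℝ) : ℝ := ∑ i, |a i|

/-- The entrywise supremum norm of a p×p matrix. -/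
noncomputable def matLinf {p : ℕ} (A : Matrix (Fin p) (Fin p) ℝ) : ℝ := ⨆ i, ⨆ j, |A i j|

theorem abs_apply_le_matLinf {p : ℕ} (A : Matrix (Fin p) (Fin p) ℝ) (i j : Fin p) :
    |A i j| ≤ matLinf A :=
  (le_ciSup (f := fun j => |A i j|) (Set.finite_range _).bddAbove j).trans
    (le_ciSup (f := fun i => ⨆ j, |A i j|) (Set.finite_range _).bddAbove i)

/-- Hölder-type bound for the bilinear form of a matrix. -/
theorem abs_dotProduct_mulVec_le {p : ℕ} (A : Matrix (Fin p) (Fin p) ℝ) (u v : Fin p → ℝ) :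
    |u ⬝ᵥ A *ᵥ v| ≤ matLinf A * vecL1 v * vecL1 u := by
  have hrow (i : Fin p) : |(A *ᵥ v) i| ≤ matLinf A * vecL1 v := by
    simp only [mulVec, dotProduct, vecL1, Finset.mul_sum]
    refine (Finset.abs_sum_le_sum_abs _ _).trans (Finset.sum_le_sum fun j _ => ?_)
    rw [abs_mul]
    exact mul_le_mul_of_nonneg_right (abs_apply_le_matLinf A i j) (abs_nonneg _)
  rw [dotProduct, vecL1.eq_def u, Finset.mul_sum]
  refine (Finset.abs_sum_le_sum_abs _ _).trans (Finset.sum_le_sum fun i _ => ?_)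
  rw [abs_mul, mul_comm]
  exact mul_le_mul_of_nonneg_right (hrow i) (abs_nonneg _)

/-- Lower bound for the quadratic form: if Σ̂ is PSD and Σβ* = e, then for every β̂,
(β̂ − β*)ᵀ(Σ̂ β̂ − e) ≥ −‖Σ̂ − Σ‖_∞ |β*|₁ |β̂ − β*|₁. -/
theorem scio_quadratic_lower_bound {p : ℕ}
    (Shat : Matrix (Fin p) (Fin p) ℝ) (hSpsd : Shat.PosSemidef)
    (S : Matrix (Fin p) (Fin p) ℝ) (e : Fin p → ℝ)
    (βstar : Fin p → ℝ) (hβstar : S.mulVec βstar = e)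
    (βhat : Fin p → ℝ) :
    -(matLinf (Shat - S)) * vecL1 βstar * vecL1 (βhat - βstar) ≤
      (βhat - βstar) ⬝ᵥ (Shat.mulVec βhat - e) := by
  have hdecomp : Shat *ᵥ βhat - e = Shat *ᵥ (βhat - βstar) + (Shat - S) *ᵥ βstar := by
    rw [← hβstar, mulVec_sub, sub_mulVec]
    abel
  have hpsd : 0 ≤ (βhat - βstar) ⬝ᵥ Shat *ᵥ (βhat - βstar) := by
    simpa using hSpsd.dotProduct_mulVec_nonneg (βhat - βstar)
  have hbound := neg_le_of_abs_le (abs_dotProduct_mulVec_le (Shat - S) (βhat - βstar) βstar)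
  rw [hdecomp, dotProduct_add]
  linarith
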